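/- Let d ≥ 0, let K ⊆ ℝⁿ_+ have the load over-satisfaction property, and suppose B^σ(m, d) ⊆ K. Then for every p_D ∈ ℝⁿ_+, inf{ c^⊤ z : z ∈ ℝⁿ_+, p_D − z ∈ K } ≤ max(0, ‖σ^{-1}(p_D − m)‖ − d) · M_σ. -/

import Mathlib

/-!
If the forecast distance `r = ‖σ⁻¹(p_D - m)‖` is at most `d`, then `p_D` already lies in `K` and no
load is shed. Otherwise move from `m` towards `p_D` up to the boundary of the ball: the point
`p = m + (d / r)(p_D - m)` is feasible, and so is `min(p_D, p) = p_D - (p_D - p)^+`, because it is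
nonnegative and lies below `p`. Shedding `z = (p_D - p)^+` costs `(r - d) c^⊤ (σξ)^+` with the unit
vector `ξ = σ⁻¹(p_D - m) / r`, hence at most `(r - d) M_σ`.
-/

open scoped BigOperators

/-- The weighted norm `‖σ⁻¹ v‖` (Euclidean norm of `σ⁻¹` applied to `v`). -/
noncomputable def invWeightedNorm {n : ℕ} (σ : Matrix (Fin n) (Fin n) ℝ)
    (v : EuclideanSpace ℝ (Fin n)) : ℝ :=
  ‖(EuclideanSpace.equiv (Fin n) ℝ).symm (σ⁻¹.mulVec (EuclideanSpace.equiv (Fin n) ℝ v))‖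

/-- `M_σ := max_{‖ξ‖ = 1} c^⊤ (σξ)^+`, the maximum over the Euclidean unit sphere. -/
noncomputable def Msigma {n : ℕ} (c : EuclideanSpace ℝ (Fin n))
    (σ : Matrix (Fin n) (Fin n) ℝ) : ℝ :=
  sSup {t : ℝ | ∃ ξ : EuclideanSpace ℝ (Fin n), ‖ξ‖ = 1 ∧
    t = ∑ i, c i * max (σ.mulVec (EuclideanSpace.equiv (Fin n) ℝ ξ) i) 0}

lemma invWeightedNorm_smul {n : ℕ} (σ : Matrix (Fin n) (Fin n) ℝ) (s : ℝ)
    (v : EuclideanSpace ℝ (Fin n)) :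
    invWeightedNorm σ (s • v) = |s| * invWeightedNorm σ v := by
  simp only [invWeightedNorm, map_smul, Matrix.mulVec_smul, norm_smul, Real.norm_eq_abs]

/-- Compactness of the sphere makes the supremum defining `Msigma` an upper bound. -/
lemma le_Msigma {n : ℕ} (c : EuclideanSpace ℝ (Fin n)) (σ : Matrix (Fin n) (Fin n) ℝ)
    (ξ : EuclideanSpace ℝ (Fin n)) (hξ : ‖ξ‖ = 1) :
    ∑ i, c i * max (σ.mulVec (EuclideanSpace.equiv (Fin n) ℝ ξ) i) 0 ≤ Msigma c σ := by
  refine le_csSup ?_ ⟨ξ, hξ, rfl⟩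
  have hcont : Continuous fun ξ : EuclideanSpace ℝ (Fin n) =>
      ∑ i, c i * max (σ.mulVec (EuclideanSpace.equiv (Fin n) ℝ ξ) i) 0 := by
    have h : Continuous fun ξ : EuclideanSpace ℝ (Fin n) =>
        σ.mulVec (EuclideanSpace.equiv (Fin n) ℝ ξ) :=
      Continuous.matrix_mulVec continuous_const (EuclideanSpace.equiv (Fin n) ℝ).continuous
    exact continuous_finsetSum _ fun i _ =>
      continuous_const.mul (((continuous_apply i).comp h).max continuous_const)
  refine ((isCompact_sphere (0 : EuclideanSpace ℝ (Fin n)) 1).image hcont).bddAbove.mono ?_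
  rintro t ⟨ξ, hξ, rfl⟩
  exact ⟨ξ, by simpa using hξ, rfl⟩

/-- if `d ≥ 0`, `K ⊆ ℝⁿ_+` has the load over-satisfaction property and the
weighted ball `B^σ(m, d)` is contained in `K`, then for every `p_D ∈ ℝⁿ_+` the minimal
load-shedding cost is at most `max(0, ‖σ^{-1}(p_D − m)‖ − d) · M_σ`. -/
theorem loadShed_le_of_ball_subset {n : ℕ} (hn : 1 ≤ n)
    (c : EuclideanSpace ℝ (Fin n)) (hc : ∀ j, 0 < c j)
    (σ : Matrix (Fin n) (Fin n) ℝ) (hσ : IsUnit σ.det)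
    (m : EuclideanSpace ℝ (Fin n)) (d : ℝ) (hd : 0 ≤ d)
    (K : Set (EuclideanSpace ℝ (Fin n)))
    (hKpos : ∀ p ∈ K, ∀ j, 0 ≤ p j)
    (hKover : ∀ p ∈ K, ∀ p' : EuclideanSpace ℝ (Fin n),
      (∀ j, 0 ≤ p' j) → (∀ j, p' j ≤ p j) → p' ∈ K)
    (hball : {p : EuclideanSpace ℝ (Fin n) | invWeightedNorm σ (p - m) ≤ d} ⊆ K) :
    ∀ pD : EuclideanSpace ℝ (Fin n), (∀ j, 0 ≤ pD j) →
      sInf {t : ℝ | ∃ z : EuclideanSpace ℝ (Fin n),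
          (∀ j, 0 ≤ z j) ∧ pD - z ∈ K ∧ t = ∑ j, c j * z j} ≤
        max 0 (invWeightedNorm σ (pD - m) - d) * Msigma c σ := by
  intro pD hpD
  have hbdd : BddBelow {t : ℝ | ∃ z : EuclideanSpace ℝ (Fin n),
      (∀ j, 0 ≤ z j) ∧ pD - z ∈ K ∧ t = ∑ j, c j * z j} := by
    refine ⟨0, ?_⟩
    rintro t ⟨z, hz, -, rfl⟩
    exact Finset.sum_nonneg fun j _ => mul_nonneg (hc j).le (hz j)
  rcases le_or_gt (invWeightedNorm σ (pD - m)) d with hle | hlt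
  · rw [max_eq_left (by linarith), zero_mul]
    exact csInf_le hbdd ⟨0, by simp, by simpa using hball hle, by simp⟩
  · set v := pD - m with hv
    set r := invWeightedNorm σ v with hr
    have hr0 : 0 < r := hd.trans_lt hlt
    rw [max_eq_right (by linarith)]
    have hpK : m + (d / r) • v ∈ K := by
      apply hball
      simp only [Set.mem_ofPred_eq, add_sub_cancel_left, invWeightedNorm_smul, ← hr]
      rw [abs_of_nonneg (by positivity), div_mul_cancel₀ _ hr0.ne']
    set p := m + (d / r) • v with hp
    have hdiff : ∀ j, pD j - p j = (r - d) * (r⁻¹ * v j) := by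
      intro j
      simp only [hp, hv, PiLp.add_apply, PiLp.smul_apply, PiLp.sub_apply, smul_eq_mul]
      field_simp
      ring
    set ξ : EuclideanSpace ℝ (Fin n) := r⁻¹ • (EuclideanSpace.equiv (Fin n) ℝ).symm
      (σ⁻¹.mulVec (EuclideanSpace.equiv (Fin n) ℝ v)) with hξ
    have hξ1 : ‖ξ‖ = 1 := by
      rw [hξ, norm_smul, Real.norm_of_nonneg (by positivity)]
      exact inv_mul_cancel₀ hr0.ne'
    have hσξ : ∀ j, σ.mulVec (EuclideanSpace.equiv (Fin n) ℝ ξ) j = r⁻¹ * v j := by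
      intro j
      rw [hξ, map_smul, ContinuousLinearEquiv.apply_symm_apply, Matrix.mulVec_smul,
        Matrix.mulVec_mulVec, Matrix.mul_nonsing_inv σ hσ, Matrix.one_mulVec]
      rfl
    have hcost := mul_le_mul_of_nonneg_left (le_Msigma c σ ξ hξ1) (sub_nonneg.2 hlt.le)
    refine le_trans (csInf_le hbdd ⟨WithLp.toLp 2 fun j => max (pD j - p j) 0,
      fun j => le_max_right _ _, ?_, rfl⟩) (le_trans (le_of_eq ?_) hcost)
    · refine hKover p hpK _ (fun j => ?_) (fun j => ?_)
      · have h1 := hKpos p hpK j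
        have h2 := hpD j
        simp only [PiLp.sub_apply]
        rcases max_choice (pD j - p j) 0 with h | h <;> rw [h] <;> linarith
      · have h1 := le_max_left (pD j - p j) 0
        simp only [PiLp.sub_apply]
        linarith
    · rw [Finset.mul_sum]
      refine Finset.sum_congr rfl fun j _ => ?_
      have hmax : max ((r - d) * (r⁻¹ * v j)) 0 = (r - d) * max (r⁻¹ * v j) 0 := by
        rw [mul_max_of_nonneg _ _ (sub_nonneg.2 hlt.le), mul_zero]
      simp only [hσξ, hdiff, hmax]
      ring
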